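/- Let H ∈ (0,1) and let n be an integer with n ≥ 2^{1/H}. Then, with c₂ := (2π·ln 2)^{−1/2}, one has f(H,n) ≥ c₂/((6+c₂)·5·√H) − 0.0107. -/

import Mathlib

open MeasureTheory ProbabilityTheory Real Set Filter Topology

noncomputable section

/-- `X` is a centered Gaussian process on the time set `S`: every finite linear
combination `∑ i, c i * X (ts i)` of its values at times in `S` is a centered
Gaussian random variable. -/
def IsCenteredGaussianOn {Ω : Type} [MeasurableSpace Ω] (μ : Measure Ω)
    (X : ℝ → Ω → ℝ) (S : Set ℝ) : Prop :=
  (∀ t ∈ S, Measurable (X t)) ∧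
  ∀ (k : ℕ) (c : Fin k → ℝ) (ts : Fin k → ℝ), (∀ i, ts i ∈ S) →
    ∃ v : NNReal, μ.map (fun ω => ∑ i, c i * X (ts i) ω) = gaussianReal 0 v

/-- The `L²`-norm `‖Y‖₂ = (E Y²)^{1/2}` of a real random variable. -/
def l2norm {Ω : Type} [MeasurableSpace Ω] (μ : Measure Ω) (Y : Ω → ℝ) : ℝ :=
  Real.sqrt (∫ ω, (Y ω) ^ 2 ∂μ)

/-- The expected supremum `E [sup_{0 ≤ t ≤ 1} X_t]`. -/
def expMax {Ω : Type} [MeasurableSpace Ω] (μ : Measure Ω) (X : ℝ → Ω → ℝ) : ℝ :=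
  ∫ ω, (⨆ t : Icc (0:ℝ) 1, X t.1 ω) ∂μ

/-- The expected maximum over the grid: `E [max_{0 ≤ i ≤ n} X_{i/n}]`. -/
def expMaxGrid {Ω : Type} [MeasurableSpace Ω] (μ : Measure Ω) (X : ℝ → Ω → ℝ) (n : ℕ) : ℝ :=
  ∫ ω, (⨆ i : Fin (n + 1), X (((i : ℕ) : ℝ) / (n : ℝ)) ω) ∂μ

/-- `B` is a fractional Brownian motion with Hurst parameter `H`: a centered Gaussian
process on `[0,∞)` with a.s. continuous sample paths, `B 0 = 0`, and covariance
`E[B_s B_t] = (s^{2H} + t^{2H} - |t-s|^{2H}) / 2`. -/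
def IsFBM {Ω : Type} [MeasurableSpace Ω] (μ : Measure Ω) (H : ℝ) (B : ℝ → Ω → ℝ) : Prop :=
  IsCenteredGaussianOn μ B (Ici 0) ∧
  (∀ᵐ ω ∂μ, ContinuousOn (fun t => B t ω) (Ici 0)) ∧
  (∀ᵐ ω ∂μ, B 0 ω = 0) ∧
  ∀ s t : ℝ, 0 ≤ s → 0 ≤ t →
    ∫ ω, B s ω * B t ω ∂μ = (s ^ (2 * H) + t ^ (2 * H) - |t - s| ^ (2 * H)) / 2

/-- **Stein's lemma** for a centered real Gaussian measure. -/
lemma integral_mul_gaussianReal_eq {v : NNReal} {g g' : ℝ → ℝ} {C : ℝ}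
    (hg : ∀ x, HasDerivAt g (g' x) x) (hg' : Continuous g')
    (hC : ∀ x, |g x| ≤ C) (hC' : ∀ x, |g' x| ≤ C) :
    ∫ x, x * g x ∂(gaussianReal 0 v) = v * ∫ x, g' x ∂(gaussianReal 0 v) := by
  rcases eq_or_ne v 0 with rfl | hv
  · simp
  have hv0 : (v : ℝ) ≠ 0 := by exact_mod_cast hv
  have hvpos : (0 : ℝ) < v := by positivity
  have hgc : Continuous g := continuous_iff_continuousAt.2 fun x => (hg x).continuousAt
  set φ := gaussianPDFReal 0 v with hφ
  have hφd : ∀ x, HasDerivAt φ (-(x / v) * φ x) x := by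
    intro x
    have h1 : HasDerivAt (fun x : ℝ => -(x - 0) ^ 2 / (2 * (v : ℝ))) (-(x / v)) x := by
      have := ((((hasDerivAt_id x).sub_const 0).pow 2).neg).div_const (2 * (v : ℝ))
      convert! this using 1
      simp
      field_simp
    have h2 := (h1.exp).const_mul ((√(2 * π * v))⁻¹)
    convert! h2 using 1
    simp only [hφ, gaussianPDFReal]
    ring
  have hφi : Integrable φ := integrable_gaussianPDFReal 0 v
  have hxφ : Integrable (fun x => x * φ x) := by
    have h := (integrable_mul_exp_neg_mul_sq (b := 1 / (2 * (v : ℝ))) (by positivity)).const_mul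
      ((√(2 * π * v))⁻¹)
    refine h.congr (ae_of_all _ fun x => ?_)
    simp only [hφ, gaussianPDFReal, sub_zero]
    rw [show -(1 / (2 * (v : ℝ))) * x ^ 2 = -x ^ 2 / (2 * v) by ring]
    ring
  have key := integral_mul_deriv_eq_deriv_mul_of_integrable (u := g) (v := φ) (u' := g')
    (v' := fun x => -(x / v) * φ x) (fun x _ => hg x) (fun x _ => hφd x)
    (by
      have := (hxφ.bdd_mul (c := C) hgc.aestronglyMeasurable
        (ae_of_all _ hC)).const_mul (-(v : ℝ)⁻¹)
      refine this.congr (ae_of_all _ fun x => ?_)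
      simp only [Pi.mul_apply]
      ring)
    (hφi.bdd_mul (c := C) hg'.aestronglyMeasurable (ae_of_all _ hC'))
    (hφi.bdd_mul (c := C) hgc.aestronglyMeasurable (ae_of_all _ hC))
  rw [integral_gaussianReal_eq_integral_smul hv, integral_gaussianReal_eq_integral_smul hv]
  simp only [smul_eq_mul]
  calc ∫ x, φ x * (x * g x) = ∫ x, -(v : ℝ) * (g x * (-(x / v) * φ x)) := by
        congr 1; ext x; field_simp
    _ = -(v : ℝ) * ∫ x, g x * (-(x / v) * φ x) := integral_const_mul _ _
    _ = v * ∫ x, φ x * g' x := by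
        rw [key]; simp only [mul_comm (φ _)]; ring

/-- **Gaussian integration by parts** along one coordinate of a centered Gaussian vector. -/
lemma ProbabilityTheory.HasGaussianLaw.integral_mul_eq {Ω ι : Type*} [MeasurableSpace Ω] [Fintype ι]
    {μ : Measure Ω} {X : ι → Ω → ℝ} (hX : HasGaussianLaw (fun ω i => X i ω) μ)
    (hm : ∀ i, Measurable (X i)) (h0 : ∀ i, ∫ ω, X i ω ∂μ = 0) (i : ι)
    (hi : 0 < ∫ ω, X i ω * X i ω ∂μ) {G D : (ι → ℝ) → ℝ} {C : ℝ}
    (hG : Continuous G) (hD : Continuous D) (hGC : ∀ y, |G y| ≤ C) (hDC : ∀ y, |D y| ≤ C)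
    (hGD : ∀ (w : ι → ℝ) (t : ℝ), HasDerivAt
      (fun t : ℝ => G (t • (fun j => (∫ ω, X i ω * X j ω ∂μ) / ∫ ω, X i ω * X i ω ∂μ) + w))
      (D (t • (fun j => (∫ ω, X i ω * X j ω ∂μ) / ∫ ω, X i ω * X i ω ∂μ) + w)) t) :
    ∫ ω, X i ω * G (fun j => X j ω) ∂μ
      = (∫ ω, X i ω * X i ω ∂μ) * ∫ ω, D (fun j => X j ω) ∂μ := by
  classical
  have := hX.isProbabilityMeasure
  set σ := ∫ ω, X i ω * X i ω ∂μ with hσ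
  set a : ι → ℝ := fun j => (∫ ω, X i ω * X j ω ∂μ) / σ with ha
  have hL2 : ∀ j, MemLp (X j) 2 μ := fun j => (hX.eval j).memLp_two
  let W : ι → Ω → ℝ := fun j ω => X j ω - X i ω * a j
  have hWm : Measurable (fun ω j => W j ω) :=
    measurable_pi_lambda _ fun j => (hm j).sub ((hm i).mul_const _)
  have hpair : HasGaussianLaw (fun ω => (fun _ : Unit => X i ω, fun j => W j ω)) μ := by
    let L : (ι → ℝ) →L[ℝ] (Unit → ℝ) × (ι → ℝ) :=
      (ContinuousLinearMap.pi fun _ => ContinuousLinearMap.proj i).prod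
        (ContinuousLinearMap.pi fun j => ContinuousLinearMap.proj j -
          a j • ContinuousLinearMap.proj i)
    have := hX.map_fun L
    convert! this using 2 with ω
    simp only [L, W, ContinuousLinearMap.prod_apply]
    congr 1
    ext j
    simp [mul_comm]
  have hind : IndepFun (fun ω (_ : Unit) => X i ω) (fun ω j => W j ω) μ := by
    refine HasGaussianLaw.indepFun_of_covariance_eval (X := fun _ : Unit => X i) hpair ?_
    intro _ j
    have hWL2 : MemLp (W j) 2 μ := (hL2 j).sub ((hL2 i).mul_const _)
    rw [covariance_eq_sub (hL2 i) hWL2, h0 i, zero_mul, sub_zero]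
    have e : (X i * W j) = fun ω => X i ω * X j ω - (X i ω * X i ω) * a j := by
      ext ω; simp [W]; ring
    have i1 : Integrable (fun ω => X i ω * X j ω) μ := (hL2 i).integrable_mul (hL2 j)
    have i2 : Integrable (fun ω => X i ω * X i ω * a j) μ :=
      Integrable.mul_const ((hL2 i).integrable_mul (hL2 i)) _
    rw [e, integral_sub i1 i2, integral_mul_const, ← hσ]
    simp only [ha]
    field_simp
    ring
  have hind' : IndepFun (X i) (fun ω j => W j ω) μ :=
    hind.comp (φ := fun f : Unit → ℝ => f ()) (ψ := id) (by fun_prop) measurable_id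
  have hlaw : μ.map (X i) = gaussianReal 0 σ.toNNReal := by
    rw [(hX.eval i).map_eq_gaussianReal, h0 i, variance_of_integral_eq_zero (hm i).aemeasurable
      (h0 i)]
    simp only [hσ, pow_two]
  have hprod : μ.map (fun ω => (X i ω, fun j => W j ω))
      = (gaussianReal 0 σ.toNNReal).prod (μ.map fun ω j => W j ω) := by
    rw [← hlaw]
    exact (indepFun_iff_map_prod_eq_prod_map_map (hm i).aemeasurable hWm.aemeasurable).1 hind'
  have hpm : Measurable (fun ω => (X i ω, fun j => W j ω)) := (hm i).prodMk hWm
  have : IsProbabilityMeasure (μ.map fun ω j => W j ω) :=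
    Measure.isProbabilityMeasure_map hWm.aemeasurable
  have hrec : ∀ ω, (fun j => X j ω) = X i ω • a + fun j => W j ω := by
    intro ω; ext j; simp [W]
  have hcont : Continuous (fun p : ℝ × (ι → ℝ) => p.1 • a + p.2) := by fun_prop
  have hid : Integrable (fun x : ℝ => x) (gaussianReal 0 σ.toNNReal) :=
    (memLp_id_gaussianReal 1).integrable le_rfl
  have eG : ∫ ω, X i ω * G (fun j => X j ω) ∂μ
      = ∫ w, ∫ x, x * G (x • a + w) ∂(gaussianReal 0 σ.toNNReal) ∂(μ.map fun ω j => W j ω) := by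
    rw [← integral_prod_symm (f := fun p : ℝ × (ι → ℝ) => p.1 * G (p.1 • a + p.2)), ← hprod,
      integral_map hpm.aemeasurable]
    · simp only [hrec]
    · exact (by fun_prop : Continuous fun p : ℝ × (ι → ℝ) =>
        p.1 * G (p.1 • a + p.2)).aestronglyMeasurable
    · exact (hid.comp_fst _).mul_bdd (c := C) (hG.comp hcont).aestronglyMeasurable
        (ae_of_all _ fun p => hGC _)
  have eD : ∫ ω, D (fun j => X j ω) ∂μ
      = ∫ w, ∫ x, D (x • a + w) ∂(gaussianReal 0 σ.toNNReal) ∂(μ.map fun ω j => W j ω) := by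
    rw [← integral_prod_symm (f := fun p : ℝ × (ι → ℝ) => D (p.1 • a + p.2)), ← hprod,
      integral_map hpm.aemeasurable]
    · simp only [hrec]
    · exact (hD.comp hcont).aestronglyMeasurable
    · exact Integrable.of_bound (hD.comp hcont).aestronglyMeasurable C
        (ae_of_all _ fun p => hDC _)
  rw [eG, eD, ← integral_const_mul]
  congr 1
  ext w
  have := integral_mul_gaussianReal_eq (v := σ.toNNReal) (C := C) (hGD w)
    (by fun_prop) (fun x => hGC _) (fun x => hDC _)
  rw [this, Real.coe_toNNReal _ hi.le]

/-- The Gibbs weight `exp (β yᵢ) / ∑ⱼ exp (β yⱼ)`. -/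
def gibbs {ι : Type*} [Fintype ι] (β : ℝ) (i : ι) (y : ι → ℝ) : ℝ :=
  Real.exp (β * y i) / ∑ j, Real.exp (β * y j)

section gibbs

variable {ι : Type*} [Fintype ι] [Nonempty ι]

lemma sum_exp_mul_pos (β : ℝ) (y : ι → ℝ) : 0 < ∑ j, Real.exp (β * y j) :=
  Finset.sum_pos (fun _ _ => Real.exp_pos _) Finset.univ_nonempty

lemma gibbs_nonneg (β : ℝ) (i : ι) (y : ι → ℝ) : 0 ≤ gibbs β i y :=
  div_nonneg (Real.exp_pos _).le (sum_exp_mul_pos β y).le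

lemma sum_gibbs (β : ℝ) (y : ι → ℝ) : ∑ i, gibbs β i y = 1 := by
  simp only [gibbs, ← Finset.sum_div]
  exact div_self (sum_exp_mul_pos β y).ne'

lemma gibbs_le_one (β : ℝ) (i : ι) (y : ι → ℝ) : gibbs β i y ≤ 1 := by
  rw [← sum_gibbs β y]
  exact Finset.single_le_sum (fun j _ => gibbs_nonneg β j y) (Finset.mem_univ i)

lemma abs_gibbs_le_one (β : ℝ) (i : ι) (y : ι → ℝ) : |gibbs β i y| ≤ 1 := by
  rw [abs_of_nonneg (gibbs_nonneg β i y)]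
  exact gibbs_le_one β i y

@[fun_prop]
lemma continuous_gibbs (β : ℝ) (i : ι) : Continuous (gibbs β i) := by
  unfold gibbs
  exact Continuous.div (by fun_prop) (by fun_prop) fun y => (sum_exp_mul_pos β y).ne'

lemma hasDerivAt_gibbs_line (β : ℝ) (i : ι) (a w : ι → ℝ) (t : ℝ) :
    HasDerivAt (fun t : ℝ => gibbs β i (t • a + w))
      (β * gibbs β i (t • a + w) * (a i - ∑ j, a j * gibbs β j (t • a + w))) t := by
  have h1 : ∀ j, HasDerivAt (fun t : ℝ => Real.exp (β * (t • a + w) j))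
      (Real.exp (β * (t • a + w) j) * (β * a j)) t := by
    intro j
    have : HasDerivAt (fun t : ℝ => β * (t • a + w) j) (β * a j) t := by
      simp only [Pi.add_apply, Pi.smul_apply, smul_eq_mul]
      simpa using (((hasDerivAt_id t).mul_const (a j)).add_const (w j)).const_mul β
    exact this.exp
  have h2 : HasDerivAt (fun t : ℝ => ∑ j, Real.exp (β * (t • a + w) j))
      (∑ j, Real.exp (β * (t • a + w) j) * (β * a j)) t := HasDerivAt.fun_sum fun j _ => h1 j
  have hZ := (sum_exp_mul_pos β (t • a + w)).ne'
  convert! (h1 i).fun_div h2 hZ using 1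
  have e : ∑ j, a j * gibbs β j (t • a + w)
      = (∑ j, Real.exp (β * (t • a + w) j) * a j) / ∑ j, Real.exp (β * (t • a + w) j) := by
    rw [Finset.sum_div]
    exact Finset.sum_congr rfl fun j _ => by rw [gibbs]; ring
  have e' : ∑ j, Real.exp (β * (t • a + w) j) * (β * a j)
      = β * ∑ j, Real.exp (β * (t • a + w) j) * a j := by
    rw [Finset.mul_sum]
    exact Finset.sum_congr rfl fun j _ => by ring
  rw [e, e', gibbs]
  field_simp

/-- If the maximum of `x` is close to its mean, then the Gibbs weights are spread out. -/
lemma one_sub_sum_gibbs_sq_ge (hι : 2 ≤ Fintype.card ι) {β : ℝ} (hβ : 0 ≤ β) {x : ι → ℝ} {b : ℝ}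
    (hb : ∀ i, x i ≤ b) :
    2 / 5 * (1 + β * ((∑ i, x i) / Fintype.card ι - b) / Real.log (Fintype.card ι))
      ≤ 1 - ∑ i, gibbs β i x ^ 2 := by
  obtain ⟨k, hk⟩ := Finite.exists_max x
  set m : ℝ := (Fintype.card ι : ℝ) with hm
  have hm2 : (2 : ℝ) ≤ m := Nat.ofNat_le_cast.2 hι
  have hlog : Real.log 2 ≤ Real.log m := Real.log_le_log two_pos hm2
  have hl2 := Real.log_two_gt_d9
  have hlogpos : 0 < Real.log m := by linarith
  set Z := ∑ j, Real.exp (β * x j) with hZ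
  have hZpos : 0 < Z := sum_exp_mul_pos β x
  set L := Real.log Z - β * x k with hL
  have hexpL : Real.exp (-L) = Real.exp (β * x k) / Z := by
    rw [hL, neg_sub, Real.exp_sub, Real.exp_log hZpos]
  have hL0 : 0 ≤ L := by
    have : Real.exp (β * x k) ≤ Z :=
      Finset.single_le_sum (f := fun j => Real.exp (β * x j)) (fun j _ => (Real.exp_pos _).le)
        (Finset.mem_univ k)
    have := (Real.le_log_iff_exp_le hZpos).2 this
    linarith
  have hLm : L ≤ Real.log m := by
    have : Z ≤ m * Real.exp (β * x k) := by
      calc Z ≤ ∑ _j : ι, Real.exp (β * x k) := Finset.sum_le_sum fun j _ =>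
            Real.exp_le_exp.2 (mul_le_mul_of_nonneg_left (hk j) hβ)
        _ = _ := by simp [hm]
    have := Real.log_le_log hZpos this
    rw [Real.log_mul (by positivity) (Real.exp_ne_zero _), Real.log_exp] at this
    linarith
  have hJ : Real.log m + β * ((∑ i, x i) / m) ≤ Real.log Z := by
    rw [Real.le_log_iff_exp_le hZpos, Real.exp_add, Real.exp_log (by positivity)]
    have := convexOn_exp.map_sum_le (t := Finset.univ) (w := fun _ : ι => 1 / m)
      (p := fun i => β * x i) (fun _ _ => by positivity)
      (by simp [← hm]) (fun _ _ => Set.mem_univ _)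
    simp only [smul_eq_mul, ← Finset.mul_sum] at this
    rw [show β * ((∑ i, x i) / m) = 1 / m * (β * ∑ i, x i) by ring]
    calc m * Real.exp (1 / m * (β * ∑ i, x i)) ≤ m * (1 / m * Z) := by gcongr
      _ = Z := by field_simp
  have hsq : ∑ i, gibbs β i x ^ 2 ≤ Real.exp (-L) := by
    calc ∑ i, gibbs β i x ^ 2 ≤ ∑ i, Real.exp (-L) * gibbs β i x := by
          refine Finset.sum_le_sum fun i _ => ?_
          rw [pow_two]
          refine mul_le_mul_of_nonneg_right ?_ (gibbs_nonneg β i x)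
          rw [hexpL, gibbs]
          gcongr
          exact hk i
      _ = Real.exp (-L) := by rw [← Finset.mul_sum, sum_gibbs, mul_one]
  have hexp : Real.exp (-L) ≤ 1 / (1 + L) := by
    rw [Real.exp_neg, one_div]
    exact inv_anti₀ (by linarith) (by linarith [Real.add_one_le_exp L])
  have hfin : 2 / 5 * (L / Real.log m) ≤ 1 - 1 / (1 + L) := by
    have : 1 - 1 / (1 + L) = L / (1 + L) := by field_simp; ring
    rw [this, ← mul_div_assoc, div_le_div_iff₀ hlogpos (by linarith)]
    nlinarith
  have hlow : 1 + β * ((∑ i, x i) / m - b) / Real.log m ≤ L / Real.log m := by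
    have e : 1 + β * ((∑ i, x i) / m - b) / Real.log m
        = (Real.log m + β * ((∑ i, x i) / m - b)) / Real.log m := by field_simp
    rw [e]
    gcongr
    have := mul_le_mul_of_nonneg_left (hb k) hβ
    rw [hL]
    linarith
  linarith

end gibbs

/-- If the weights `p` sum to one and `c` is the covariance of a `√d`-separated family, then the
variance gap of `p` is at least `d / 2 * (1 - ∑ pᵢ²)`. -/
lemma half_mul_one_sub_sum_sq_le {ι : Type*} [Fintype ι] {p : ι → ℝ} {c : ι → ι → ℝ} {d : ℝ}
    (hp : ∀ i, 0 ≤ p i) (hp1 : ∑ i, p i = 1)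
    (hc : ∀ i j, i ≠ j → d ≤ c i i + c j j - 2 * c i j) :
    d / 2 * (1 - ∑ i, p i ^ 2) ≤ ∑ i, (p i * c i i - ∑ j, c i j * (p i * p j)) := by
  classical
  have h1 : ∑ i, ∑ j, p i * p j * (if i = j then 0 else d)
      ≤ ∑ i, ∑ j, p i * p j * (c i i + c j j - 2 * c i j) := by
    refine Finset.sum_le_sum fun i _ => Finset.sum_le_sum fun j _ => ?_
    refine mul_le_mul_of_nonneg_left ?_ (mul_nonneg (hp i) (hp j))
    split_ifs with h
    · subst h; linarith
    · exact hc i j h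
  have h2 : ∑ i, ∑ j, p i * p j * (if i = j then 0 else d) = d * (1 - ∑ i, p i ^ 2) := by
    have : ∀ i, ∑ j, p i * p j * (if i = j then 0 else d) = d * p i - d * p i ^ 2 := by
      intro i
      have : ∀ j, p i * p j * (if i = j then 0 else d)
          = d * p i * p j - if i = j then d * p i ^ 2 else 0 := by
        intro j
        split_ifs with h
        · subst h; ring
        · ring
      simp_rw [this, Finset.sum_sub_distrib, ← Finset.mul_sum, hp1]
      simp
    simp_rw [this, Finset.sum_sub_distrib, ← Finset.mul_sum, hp1]
    ring
  have h3 : ∑ i, ∑ j, p i * p j * (c i i + c j j - 2 * c i j)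
      = 2 * ∑ i, (p i * c i i - ∑ j, c i j * (p i * p j)) := by
    have e : ∀ i j, p i * p j * (c i i + c j j - 2 * c i j)
        = p i * c i i * p j + p i * (p j * c j j) - 2 * (c i j * (p i * p j)) := by
      intro i j; ring
    simp_rw [e, Finset.sum_sub_distrib, Finset.sum_add_distrib, ← Finset.mul_sum, hp1,
      ← Finset.sum_mul, hp1]
    ring
  linarith

/-- A form of **Sudakov's minoration**, obtained from Gaussian integration by parts against the
Gibbs weights. -/
lemma ProbabilityTheory.HasGaussianLaw.sudakov {Ω ι : Type*} [MeasurableSpace Ω] [Fintype ι]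
    {μ : Measure Ω} {X : ι → Ω → ℝ} (hX : HasGaussianLaw (fun ω i => X i ω) μ)
    (hm : ∀ i, Measurable (X i)) (h0 : ∀ i, ∫ ω, X i ω ∂μ = 0)
    (hpos : ∀ i, 0 < ∫ ω, X i ω * X i ω ∂μ) (hι : 2 ≤ Fintype.card ι) {d : ℝ} (hd : 0 < d)
    (hdist : ∀ i j, i ≠ j → d ≤ (∫ ω, X i ω * X i ω ∂μ) + (∫ ω, X j ω * X j ω ∂μ)
      - 2 * ∫ ω, X i ω * X j ω ∂μ)
    {S : Ω → ℝ} (hS : Integrable S μ) (hXS : ∀ i ω, X i ω ≤ S ω) :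
    √(d / 5 * Real.log (Fintype.card ι)) / 2 ≤ ∫ ω, S ω ∂μ := by
  classical
  have := hX.isProbabilityMeasure
  have hne : Nonempty ι := Fintype.card_pos_iff.1 (by omega)
  set m : ℝ := (Fintype.card ι : ℝ) with hmdef
  have hm2 : (2 : ℝ) ≤ m := Nat.ofNat_le_cast.2 hι
  have hl : 0 < Real.log m := Real.log_pos (by linarith)
  set β := √(Real.log m / (d / 5)) with hβ
  have hβ2 : β ^ 2 = Real.log m / (d / 5) := Real.sq_sqrt (by positivity)
  have hβ0 : 0 < β := Real.sqrt_pos.2 (by positivity)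
  set c : ι → ι → ℝ := fun i j => ∫ ω, X i ω * X j ω ∂μ with hc
  set P : ι → Ω → ℝ := fun i ω => gibbs β i (fun j => X j ω) with hP
  have hXm : Measurable (fun ω j => X j ω) := measurable_pi_lambda _ hm
  have hPm : ∀ i, Measurable (P i) := fun i => (continuous_gibbs β i).measurable.comp hXm
  have hPb : ∀ i ω, |P i ω| ≤ 1 := fun i ω => abs_gibbs_le_one β i _
  have hPi : ∀ i, Integrable (P i) μ := fun i =>
    Integrable.of_bound (hPm i).aestronglyMeasurable 1 (ae_of_all _ (hPb i))
  have hPPi : ∀ i j, Integrable (fun ω => P i ω * P j ω) μ := fun i j =>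
    (hPi i).mul_bdd (c := 1) (hPm j).aestronglyMeasurable (ae_of_all _ (hPb j))
  have hXi : ∀ i, Integrable (X i) μ := fun i => (hX.eval i).integrable
  have hXPi : ∀ i, Integrable (fun ω => X i ω * P i ω) μ := fun i =>
    (hXi i).mul_bdd (c := 1) (hPm i).aestronglyMeasurable (ae_of_all _ (hPb i))
  have hsum : ∀ ω, ∑ i, P i ω = 1 := fun ω => sum_gibbs β _
  have ibp : ∀ i, ∫ ω, X i ω * P i ω ∂μ
      = ∫ ω, β * (P i ω * c i i - ∑ j, c i j * (P i ω * P j ω)) ∂μ := by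
    intro i
    have hii : c i i ≠ 0 := (hpos i).ne'
    rw [HasGaussianLaw.integral_mul_eq hX hm h0 i (hpos i) (G := gibbs β i)
      (D := fun y => β * gibbs β i y * (c i i / c i i - ∑ j, c i j / c i i * gibbs β j y))
      (C := 1 + |β| * (|c i i / c i i| + ∑ j, |c i j / c i i|))
      (continuous_gibbs β i) (by fun_prop) ?_ ?_ (hasDerivAt_gibbs_line β i _), ← integral_const_mul]
    · congr 1
      ext ω
      change c i i * (β * P i ω * (c i i / c i i - ∑ j, c i j / c i i * P j ω)) = _
      have e : ∑ j, c i j / c i i * P j ω = (∑ j, c i j * P j ω) / c i i := by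
        rw [Finset.sum_div]
        exact Finset.sum_congr rfl fun j _ => by ring
      have e' : ∑ j, c i j * (P i ω * P j ω) = P i ω * ∑ j, c i j * P j ω := by
        rw [Finset.mul_sum]
        exact Finset.sum_congr rfl fun j _ => by ring
      rw [e, e']
      field_simp
    · intro y
      have := abs_gibbs_le_one β i y
      have : 0 ≤ |β| * (|c i i / c i i| + ∑ j, |c i j / c i i|) := by positivity
      linarith
    · intro y
      have h1 : |∑ j, c i j / c i i * gibbs β j y| ≤ ∑ j, |c i j / c i i| := by
        refine (Finset.abs_sum_le_sum_abs _ _).trans (Finset.sum_le_sum fun j _ => ?_)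
        rw [abs_mul]
        exact mul_le_of_le_one_right (abs_nonneg _) (abs_gibbs_le_one β j y)
      have h2 := (abs_sub (c i i / c i i) (∑ j, c i j / c i i * gibbs β j y)).trans
        (add_le_add_right h1 _)
      calc |β * gibbs β i y * (c i i / c i i - ∑ j, c i j / c i i * gibbs β j y)|
          ≤ |β| * 1 * (|c i i / c i i| + ∑ j, |c i j / c i i|) := by
            rw [abs_mul, abs_mul]
            gcongr
            exact abs_gibbs_le_one β i y
        _ ≤ _ := by linarith
  have hTi : ∀ i, Integrable
      (fun ω => β * (P i ω * c i i - ∑ j, c i j * (P i ω * P j ω))) μ := fun i =>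
    (((hPi i).mul_const _).sub
      (integrable_finsetSum _ fun j _ => (hPPi i j).const_mul _)).const_mul _
  have hup : ∑ i, ∫ ω, X i ω * P i ω ∂μ ≤ ∫ ω, S ω ∂μ := by
    rw [← integral_finsetSum _ fun i _ => hXPi i]
    refine integral_mono (integrable_finsetSum _ fun i _ => hXPi i) hS fun ω => ?_
    calc ∑ i, X i ω * P i ω ≤ ∑ i, S ω * P i ω := Finset.sum_le_sum fun i _ =>
          mul_le_mul_of_nonneg_right (hXS i ω) (gibbs_nonneg β i _)
      _ = S ω := by rw [← Finset.mul_sum, hsum, mul_one]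
  have hmean : Integrable (fun ω => (∑ i, X i ω) / m) μ :=
    (integrable_finsetSum _ fun i _ => hXi i).div_const m
  have hmean0 : ∫ ω, (∑ i, X i ω) / m ∂μ = 0 := by
    rw [integral_div, integral_finsetSum _ fun i _ => hXi i]
    simp [h0]
  have hlow : β * (d / 2) * (2 / 5 * (1 + β * (0 - ∫ ω, S ω ∂μ) / Real.log m))
      ≤ ∑ i, ∫ ω, X i ω * P i ω ∂μ := by
    have hint : Integrable (fun ω => β * ((∑ i, X i ω) / m - S ω) / Real.log m) μ :=
      ((hmean.sub hS).const_mul β).div_const _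
    have e : ∫ ω, β * (d / 2) * (2 / 5 * (1 + β * ((∑ i, X i ω) / m - S ω) / Real.log m)) ∂μ
        = β * (d / 2) * (2 / 5 * (1 + β * (0 - ∫ ω, S ω ∂μ) / Real.log m)) := by
      rw [integral_const_mul, integral_const_mul, integral_add (integrable_const _) hint,
        integral_div, integral_const_mul, integral_sub hmean hS, hmean0]
      simp
    rw [← e, Finset.sum_congr rfl fun i _ => ibp i, ← integral_finsetSum _ fun i _ => hTi i]
    refine integral_mono ((((integrable_const _).add hint).const_mul _).const_mul _)
      (integrable_finsetSum _ fun i _ => hTi i) fun ω => ?_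
    have h1 := one_sub_sum_gibbs_sq_ge hι hβ0.le (x := fun j => X j ω) (fun i => hXS i ω)
    have h2 := half_mul_one_sub_sum_sq_le (p := fun i => P i ω) (c := c) (d := d)
      (fun i => gibbs_nonneg β i _) (hsum ω) hdist
    calc β * (d / 2) * (2 / 5 * (1 + β * ((∑ i, X i ω) / m - S ω) / Real.log m))
        ≤ β * (d / 2) * (1 - ∑ i, P i ω ^ 2) := by gcongr
      _ = β * (d / 2 * (1 - ∑ i, P i ω ^ 2)) := by ring
      _ ≤ β * ∑ i, (P i ω * c i i - ∑ j, c i j * (P i ω * P j ω)) := by gcongr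
      _ = _ := Finset.mul_sum _ _ _
  set I := ∫ ω, S ω ∂μ with hI
  have e1 : β * (d / 2) * (2 / 5 * (1 + β * (0 - I) / Real.log m)) = β * (d / 5) - I := by
    have : β * (d / 2) * (2 / 5 * (1 + β * (0 - I) / Real.log m))
        = β * (d / 5) - β ^ 2 * (d / 5) / Real.log m * I := by ring
    rw [this, hβ2]
    field_simp
  have e2 : √(d / 5 * Real.log m) = β * (d / 5) := by
    rw [Real.sqrt_eq_iff_mul_self_eq (by positivity) (by positivity)]
    have : β * (d / 5) * (β * (d / 5)) = β ^ 2 * (d / 5) ^ 2 := by ring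
    rw [this, hβ2]
    field_simp
  rw [e2]
  linarith

lemma IsCenteredGaussianOn.hasGaussianLaw {Ω : Type} [MeasurableSpace Ω] {μ : Measure Ω}
    {X : ℝ → Ω → ℝ} {S : Set ℝ} (hX : IsCenteredGaussianOn μ X S) {k : ℕ} {ts : Fin k → ℝ}
    (hts : ∀ i, ts i ∈ S) : HasGaussianLaw (fun ω i => X (ts i) ω) μ where
  isGaussian_map := by
    refine isGaussian_of_map_eq_gaussianReal fun L => ?_
    obtain ⟨v, hv⟩ := hX.2 k (fun i => L (Pi.single i 1)) ts hts
    refine ⟨0, v, ?_⟩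
    rw [Measure.map_map (by fun_prop) (measurable_pi_lambda _ fun i => hX.1 _ (hts i)), ← hv]
    congr 1
    ext ω
    simp only [Function.comp_apply]
    conv_lhs => rw [pi_eq_sum_univ' (fun i => X (ts i) ω), map_sum]
    exact Finset.sum_congr rfl fun i _ => by
      rw [map_smul, smul_eq_mul, mul_comm]

lemma IsCenteredGaussianOn.integral_eq_zero {Ω : Type} [MeasurableSpace Ω] {μ : Measure Ω}
    {X : ℝ → Ω → ℝ} {S : Set ℝ} (hX : IsCenteredGaussianOn μ X S) {t : ℝ} (ht : t ∈ S) :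
    ∫ ω, X t ω ∂μ = 0 := by
  obtain ⟨v, hv⟩ := hX.2 1 (fun _ => 1) (fun _ => t) fun _ => ht
  simp only [Finset.univ_unique, one_mul, Finset.sum_const, Finset.card_singleton, one_smul] at hv
  rw [← integral_map (f := fun x => x) (hX.1 t ht).aemeasurable aestronglyMeasurable_id, hv,
    integral_id_gaussianReal]

lemma IsFBM.integrable {Ω : Type} [MeasurableSpace Ω] {μ : Measure Ω} {H : ℝ} {B : ℝ → Ω → ℝ}
    (hB : IsFBM μ H B) {t : ℝ} (ht : 0 ≤ t) : Integrable (B t) μ :=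
  ((hB.1.hasGaussianLaw (k := 1) (ts := fun _ => t) fun _ => ht).eval 0).integrable

/-- Sudakov's minoration for a fractional Brownian motion sampled on an arithmetic progression. -/
lemma IsFBM.sudakov {Ω : Type} [MeasurableSpace Ω] {μ : Measure Ω} {H : ℝ} (hH : 0 < H)
    {B : ℝ → Ω → ℝ} (hB : IsFBM μ H B) {m : ℕ} (hm : 2 ≤ m) {δ : ℝ} (hδ : 0 < δ)
    {S : Ω → ℝ} (hS : Integrable S μ) (hBS : ∀ k < m, ∀ ω, B ((k + 1 : ℕ) * δ) ω ≤ S ω) :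
    √(δ ^ (2 * H) / 5 * Real.log m) / 2 ≤ ∫ ω, S ω ∂μ := by
  have hts : ∀ i : Fin m, ((i + 1 : ℕ) : ℝ) * δ ∈ Ici (0 : ℝ) := fun i => by
    simp only [mem_Ici]; positivity
  have hvar : ∀ i : Fin m, ∫ ω, B (((i + 1 : ℕ) : ℝ) * δ) ω * B (((i + 1 : ℕ) : ℝ) * δ) ω ∂μ
      = (((i + 1 : ℕ) : ℝ) * δ) ^ (2 * H) := fun i => by
    rw [hB.2.2.2 _ _ (hts i) (hts i), sub_self, abs_zero, Real.zero_rpow (by positivity)]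
    ring
  have := HasGaussianLaw.sudakov (X := fun (i : Fin m) => B (((i + 1 : ℕ) : ℝ) * δ))
    (hB.1.hasGaussianLaw hts) (fun i => hB.1.1 _ (hts i))
    (fun i => hB.1.integral_eq_zero (hts i)) (fun i => by rw [hvar]; positivity)
    (by simpa using hm) (d := δ ^ (2 * H)) (by positivity) (fun i j hij => ?_) hS
    (fun i ω => hBS i i.2 ω)
  · simpa using this
  · rw [hvar, hvar, hB.2.2.2 _ _ (hts i) (hts j)]
    have h : δ ^ (2 * H)
        ≤ |((j + 1 : ℕ) : ℝ) * δ - ((i + 1 : ℕ) : ℝ) * δ| ^ (2 * H) := by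
      refine Real.rpow_le_rpow hδ.le ?_ (by positivity)
      rw [← sub_mul, abs_mul, abs_of_pos hδ]
      refine le_mul_of_one_le_left hδ.le ?_
      have h1 : ((j + 1 : ℕ) : ℤ) - ((i + 1 : ℕ) : ℤ) ≠ 0 := by
        have := Fin.val_ne_of_ne hij
        omega
      exact_mod_cast Int.one_le_abs h1
    linarith

lemma abs_ciSup_le_sum {ι : Type*} [Fintype ι] [Nonempty ι] (f : ι → ℝ) :
    |⨆ i, f i| ≤ ∑ i, |f i| := by
  obtain ⟨i, hi⟩ := exists_eq_ciSup_of_finite (f := f)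
  rw [← hi]
  exact Finset.single_le_sum (f := fun i => |f i|) (fun _ _ => abs_nonneg _) (Finset.mem_univ i)

lemma IsFBM.integrable_iSup_grid {Ω : Type} [MeasurableSpace Ω] {μ : Measure Ω} {H : ℝ}
    {B : ℝ → Ω → ℝ} (hB : IsFBM μ H B) (n : ℕ) :
    Integrable (fun ω => ⨆ i : Fin (n + 1), B (((i : ℕ) : ℝ) / (n : ℝ)) ω) μ := by
  have ht : ∀ i : Fin (n + 1), (0 : ℝ) ≤ ((i : ℕ) : ℝ) / (n : ℝ) := fun i => by positivity
  refine Integrable.mono' (integrable_finsetSum Finset.univ fun i _ => (hB.integrable (ht i)).abs)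
    (Measurable.iSup fun i => hB.1.1 _ (ht i)).aestronglyMeasurable (ae_of_all _ fun ω => ?_)
  exact abs_ciSup_le_sum _

lemma sqrt_log_two_div_le_expMaxGrid {Ω : Type} [MeasurableSpace Ω] {μ : Measure Ω} {H : ℝ}
    (hH : H ∈ Ioo (0 : ℝ) 1) {B : ℝ → Ω → ℝ} (hB : IsFBM μ H B) {n : ℕ}
    (hn : (2 : ℝ) ^ (1 / H) ≤ n) :
    √(Real.log 2 / (320 * H)) / 2 ≤ expMaxGrid μ B n := by
  obtain ⟨hH0, hH1⟩ := hH
  set r : ℝ := 2 ^ (1 / (2 * H)) with hr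
  have hr1 : 1 < r := Real.one_lt_rpow one_lt_two (by positivity)
  have hr2 : r * r = 2 ^ (1 / H) := by
    rw [hr, ← Real.rpow_add two_pos]
    congr 1
    field_simp
    norm_num
  set m := ⌈r⌉₊ with hm
  have hm2 : 2 ≤ m := Nat.lt_ceil.2 (by simpa using hr1)
  have hrm : r ≤ m := Nat.le_ceil r
  have hm2r : (m : ℝ) ≤ 2 * r := by linarith [Nat.ceil_lt_add_one (zero_le_one.trans hr1.le)]
  have hmn : m ≤ n := Nat.ceil_le.2 (by nlinarith)
  set q := n / m with hq
  have hq1 : 1 ≤ q := Nat.div_pos hmn (by omega)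
  have hmq : m * q ≤ n := Nat.mul_div_le n m
  have hnq : n ≤ 2 * (m * q) := by
    have := Nat.lt_mul_div_succ n (show 0 < m by omega)
    nlinarith
  have hn0 : (0 : ℝ) < n := by exact_mod_cast (show 0 < n by omega)
  have hq0 : (0 : ℝ) < q := by exact_mod_cast hq1
  have hδ : 1 / (4 * r) ≤ (q : ℝ) / n := by
    rw [div_le_div_iff₀ (by positivity) hn0]
    have : (n : ℝ) ≤ 2 * (m * q) := by exact_mod_cast hnq
    nlinarith
  have hd : 1 / 32 ≤ ((q : ℝ) / n) ^ (2 * H) := by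
    have h4 : (4 : ℝ) ^ (2 * H) ≤ 16 := by
      calc (4 : ℝ) ^ (2 * H) ≤ 4 ^ (2 : ℝ) :=
            Real.rpow_le_rpow_of_exponent_le (by norm_num) (by linarith)
        _ = 16 := by norm_num
    have h2 : r ^ (2 * H) = 2 := by
      rw [hr, ← Real.rpow_mul two_pos.le, one_div_mul_cancel (by positivity), Real.rpow_one]
    calc (1 : ℝ) / 32 = 1 / (16 * 2) := by norm_num
      _ ≤ 1 / (4 ^ (2 * H) * r ^ (2 * H)) := by rw [h2]; gcongr
      _ = (1 / (4 * r)) ^ (2 * H) := by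
        rw [Real.div_rpow zero_le_one (by positivity), Real.one_rpow,
          Real.mul_rpow (by norm_num) (by positivity)]
      _ ≤ _ := Real.rpow_le_rpow (by positivity) hδ (by positivity)
  have hlog : Real.log 2 / (2 * H) ≤ Real.log m := by
    have := Real.log_le_log (by positivity) hrm
    rw [hr, Real.log_rpow two_pos] at this
    calc Real.log 2 / (2 * H) = 1 / (2 * H) * Real.log 2 := by ring
      _ ≤ _ := this
  have key := hB.sudakov hH0 hm2 (δ := (q : ℝ) / n) (by positivity) (hB.integrable_iSup_grid n)
    (fun k hk ω => by
      have hk' : (k + 1) * q < n + 1 := by nlinarith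
      have := le_ciSup (Finite.bddAbove_range
        fun i : Fin (n + 1) => B (((i : ℕ) : ℝ) / (n : ℝ)) ω) ⟨(k + 1) * q, hk'⟩
      refine le_of_eq_of_le ?_ this
      congr 1
      push_cast
      ring)
  refine le_trans ?_ key
  have hl2 : 0 ≤ Real.log 2 := Real.log_nonneg one_le_two
  gcongr
  calc Real.log 2 / (320 * H) = 1 / 32 / 5 * (Real.log 2 / (2 * H)) := by ring
    _ ≤ _ := by gcongr

/-- for `n ≥ 2^{1/H}` and `c₂ = (2π ln 2)^{-1/2}`,
`f(H,n) ≥ c₂/((6+c₂)·5·√H) - 0.0107`. -/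
theorem stmt18 {Ω : Type} [MeasurableSpace Ω] (μ : Measure Ω) [IsProbabilityMeasure μ]
    (H : ℝ) (hH : H ∈ Ioo (0:ℝ) 1) (B : ℝ → Ω → ℝ) (hB : IsFBM μ H B)
    (n : ℕ) (hn : (2:ℝ) ^ (1 / H) ≤ (n : ℝ)) :
    (2 * π * Real.log 2) ^ (-(1:ℝ)/2) /
        ((6 + (2 * π * Real.log 2) ^ (-(1:ℝ)/2)) * 5 * Real.sqrt H) - 0.0107 ≤
      expMaxGrid μ B n := by
  refine le_trans ?_ (sqrt_log_two_div_le_expMaxGrid hH hB hn)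
  have hH0 := hH.1
  set c := (2 * π * Real.log 2) ^ (-(1:ℝ)/2) with hc
  have hl1 := Real.log_two_gt_d9
  have hpi := Real.pi_gt_three
  have hx : (4 : ℝ) ≤ 2 * π * Real.log 2 := by nlinarith
  have hc0 : 0 < c := Real.rpow_pos_of_pos (by linarith) _
  have hc1 : c ≤ 1 / 2 := by
    calc c ≤ (4 : ℝ) ^ (-(1:ℝ)/2) :=
          Real.rpow_le_rpow_of_nonpos (by norm_num) hx (by norm_num)
      _ = 1 / 2 := by
          rw [show (4 : ℝ) = 2 ^ (2 : ℝ) by norm_num, ← Real.rpow_mul two_pos.le]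
          norm_num [Real.rpow_neg_one]
  have hs : 0 < √H := Real.sqrt_pos.2 hH0
  have h1 : c / ((6 + c) * 5 * √H) ≤ 1 / 60 / √H := by
    rw [div_le_div_iff₀ (by positivity) hs]
    nlinarith [mul_pos hc0 hs]
  have h2 : 1 / 60 / √H ≤ √(Real.log 2 / (320 * H)) / 2 := by
    rw [le_div_iff₀ two_pos]
    refine Real.le_sqrt_of_sq_le ?_
    have : (1 / 60 / √H * 2) ^ 2 = 1 / 900 / H := by
      rw [mul_pow, div_pow, Real.sq_sqrt hH0.le]
      ring
    rw [this, div_le_div_iff₀ hH0 (by positivity)]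
    nlinarith
  linarith
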